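/- General upper bound: for every α ∈ [0,1) and every d ∈ ℕ, one has q_L(α,d,d) ≤ d!·(1−α)^d / (1 + d!·(1−α)^d) ≤ d!·(1−α)^d. -/

import Mathlib

open MeasureTheory Filter ENNReal

/-- Sites of `ℤ^{d+1}`. -/
abbrev Site (d : ℕ) := Fin (d + 1) → ℤ

/-- Site-percolation configurations on `ℤ^{d+1}`: a site is open iff its value is `true`. -/
abbrev Config (d : ℕ) := Site d → Bool

/-- `P` is the i.i.d. Bernoulli(`p`) product measure on `{0,1}^ι`: it is a probability
measure whose cylinder events have the correct product probabilities. -/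
def IsBernoulli {ι : Type*} (p : ℝ) (P : Measure (ι → Bool)) : Prop :=
  IsProbabilityMeasure P ∧
    ∀ (s : Finset ι) (f : ι → Bool),
      P {ω | ∀ x ∈ s, ω x = f x} =
        ∏ x ∈ s, (if f x then ENNReal.ofReal p else ENNReal.ofReal (1 - p))

/-- A function `F : ℤ^d → ℤ` is Lipschitz: `‖x − y‖₁ = 1 → |F x − F y| ≤ 1`. -/
def IsLipschitzFn {d : ℕ} (F : (Fin d → ℤ) → ℤ) : Prop :=
  ∀ x y : Fin d → ℤ, (∑ i, |x i - y i|) = 1 → |F x - F y| ≤ 1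

/-- Height `⌊α ∑ᵢ ηᵢ xᵢ⌋` of the tilted plane `L^{α,d}_η` above `x ∈ ℤ^d`. -/
noncomputable def planeHt (α : ℝ) {d : ℕ} (η x : Fin d → ℤ) : ℤ :=
  ⌊α * ∑ i, (η i : ℝ) * (x i : ℝ)⌋

/-- `η ∈ {-1,0,1}^d`. -/
def IsSign {d : ℕ} (η : Fin d → ℤ) : Prop := ∀ i, η i = -1 ∨ η i = 0 ∨ η i = 1

/-- The event `LIP^{α,d}_η` that there is an open Lipschitz surface lying (strictly) above
the tilted plane `L^{α,d}_η`. -/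
def LIP (α : ℝ) {d : ℕ} (η : Fin d → ℤ) : Set (Config d) :=
  {ω | ∃ F : (Fin d → ℤ) → ℤ, IsLipschitzFn F ∧
    ∀ x : Fin d → ℤ, ω (Fin.snoc x (F x)) = true ∧ planeHt α η x < F x}

/-- `pc` is the critical probability `p_L(α,d,η)` of Lipschitz percolation above the tilted
plane `L^{α,d}_η`: `pc ∈ (0,1)`, for `p` below it there is `P_p`-a.s. no open Lipschitz
surface above the plane, and for `p` above it there `P_p`-a.s. is one.
(Here `P p` is the Bernoulli(`p`) product measure on `{0,1}^{ℤ^{d+1}}`.) -/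
def IsCriticalProb {d : ℕ} (P : ℝ → Measure (Config d)) (α : ℝ) (η : Fin d → ℤ)
    (pc : ℝ) : Prop :=
  pc ∈ Set.Ioo (0 : ℝ) 1 ∧
    (∀ p, 0 ≤ p → p < pc → P p (LIP α η) = 0) ∧
    (∀ p, pc < p → p ≤ 1 → P p (LIP α η) = 1)

/-- The canonical direction vector `η ∈ {-1,0,1}^d` with `k` entries equal to `1`; the
critical probability `p_L(α,d,η)` depends on `η` only through `k = ‖η‖₁`, and
`p_L(α,d,k)` denotes the common value. -/
def etaK (d k : ℕ) : Fin d → ℤ := fun i => if (i : ℕ) < k then 1 else 0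

/-!
Write `w i = 1 - α η i` and `C = d! ∏ i, w i`. The simplex `{x ∈ ℕ^d | ∑ w i x i < r}` contains
at least `r^d / C` points, so `ℕ^d` can be enumerated as `e 0, e 1, …` with
`(∑ w i (e j) i)^d ≤ C j`.

Suppose an open Lipschitz surface has height at most `H` over the origin, hence lies weakly below
the diagonal hyperplane `x_{d+1} = H + x_1 + ⋯ + x_d` over the orthant based there. Inspect the
sites of that hyperplane above `e 0, e 1, …` until the first closed one; the surface avoids it, so
over the orthant based at that site it lies weakly below the next hyperplane, and the search starts
afresh. Different steps inspect different sites, so with closed probability `q` the indices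
`k 0, k 1, …` that are found are independent geometric variables of mean `(1 - q) / q`.

After `n` steps the surface lies at least `n - H` below the plane that rises with slope `1`, while
staying above the tilted plane requires `n - H < ∑ l, ∑ i, w i (e (k l)) i`. As
`d y ≤ y^d + (d - 1)`, this forces `n - d H < C ∑ l, k l`, and Markov's inequality with `n → ∞`
bounds the probability of such a surface by `C (1 - q) / q`. When a surface exists almost surely
this is at least `1`, that is, `q ≤ C / (1 + C)`.
-/

/-! ### Lattice points in a simplex -/

lemma exists_injective_forall_lt_exists_lt {X R : Type*} [Infinite X] [LinearOrder R] {f : X → R}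
    (hf : Tendsto f cofinite atTop) :
    ∃ e : ℕ → X, Function.Injective e ∧ ∀ j x, f x < f (e j) → ∃ i < j, e i = x := by
  classical
  have hmin (s : Finset X) : ∃ y ∉ s, ∀ x ∉ s, f y ≤ f x :=
    hf.exists_within_forall_le (s := {x | x ∉ s}) (Infinite.exists_notMem_finset s)
  choose next hnext hle using hmin
  let S : ℕ → Finset X := Nat.rec ∅ fun _ s ↦ insert (next s) s
  have mem_S {x : X} {j : ℕ} : x ∈ S j ↔ ∃ i < j, next (S i) = x := by
    induction j with
    | zero => simp [S]
    | succ j ih =>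
      rw [show S (j + 1) = insert (next (S j)) (S j) from rfl, Finset.mem_insert, ih]
      simp only [Nat.lt_succ_iff_lt_or_eq, or_and_right, exists_or, exists_eq_left]
      rw [or_comm, eq_comm]
  refine ⟨fun j ↦ next (S j), Function.Injective.of_lt_imp_ne fun i j hij heq ↦ ?_, fun j x hx ↦ ?_⟩
  · exact hnext (S j) (mem_S.2 ⟨i, hij, heq⟩)
  · exact mem_S.1 (by_contra fun h ↦ hx.not_ge (hle _ _ h))

lemma tendsto_sum_mul_natCast_atTop {ι : Type*} [Fintype ι] {w : ι → ℝ} (hw : ∀ i, 0 < w i) :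
    Tendsto (fun x : ι → ℕ ↦ ∑ i, w i * x i) cofinite atTop := by
  classical
  refine tendsto_atTop.2 fun r ↦ ?_
  refine (Set.finite_Iic fun i ↦ ⌊r / w i⌋₊).subset fun x hx i ↦ Nat.le_floor ?_
  have hxi : w i * x i ≤ ∑ i, w i * x i := Finset.single_le_sum
    (fun i _ ↦ mul_nonneg (hw i).le (Nat.cast_nonneg (x i))) (Finset.mem_univ i)
  rw [le_div_iff₀' (hw i)]
  exact hxi.trans (not_le.1 (Set.mem_compl_iff _ _ |>.1 hx)).le

lemma pow_succ_sub_max_sub_pow_succ_le {w r : ℝ} (hw : 0 ≤ w) (hr : 0 ≤ r) (n : ℕ) :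
    r ^ (n + 1) - max (r - w) 0 ^ (n + 1) ≤ (n + 1) * w * r ^ n := by
  have hm : max (r - w) 0 ≤ r := max_le (sub_le_self r hw) hr
  calc r ^ (n + 1) - max (r - w) 0 ^ (n + 1)
      ≤ |r - max (r - w) 0| * (n + 1 : ℕ) * max |r| |max (r - w) 0| ^ n :=
        (le_abs_self _).trans (abs_pow_sub_pow_le _ _ (n + 1))
    _ = (r - max (r - w) 0) * (n + 1) * r ^ n := by
        rw [abs_of_nonneg (sub_nonneg.2 hm), abs_of_nonneg hr, abs_of_nonneg (le_max_right _ _),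
          max_eq_left hm, Nat.cast_succ]
    _ ≤ w * (n + 1) * r ^ n := by
        gcongr
        linarith [le_max_left (r - w) 0]
    _ = (n + 1) * w * r ^ n := by ring

lemma pow_succ_le_sum_pow {w r : ℝ} (hw : 0 < w) (hr : 0 ≤ r) (n : ℕ) :
    r ^ (n + 1) ≤ (n + 1) * w * ∑ m ∈ Finset.range ⌈r / w⌉₊, (r - m * w) ^ n := by
  let g : ℕ → ℝ := fun m ↦ max (r - m * w) 0 ^ (n + 1)
  have hzero : g 0 = r ^ (n + 1) := by simp [g, hr]
  have hlast : g ⌈r / w⌉₊ = 0 := by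
    have : r ≤ ⌈r / w⌉₊ * w := (div_le_iff₀ hw).1 (Nat.le_ceil _)
    simp [g, this]
  rw [← sub_zero (r ^ (n + 1)), ← hzero, ← hlast, ← Finset.sum_range_sub', Finset.mul_sum]
  refine Finset.sum_le_sum fun m hm ↦ ?_
  have hrm : 0 ≤ r - m * w :=
    sub_nonneg.2 ((lt_div_iff₀ hw).1 (Nat.lt_ceil.1 (Finset.mem_range.1 hm))).le
  simpa [g, hrm, add_mul, sub_add_eq_sub_sub] using pow_succ_sub_max_sub_pow_succ_le hw.le hrm n

lemma exists_finset_sum_mul_lt {d : ℕ} {w : Fin d → ℝ} (hw : ∀ i, 0 < w i) {r : ℝ} (hr : 0 < r) :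
    ∃ t : Finset (Fin d → ℕ), (∀ x ∈ t, ∑ i, w i * x i < r) ∧
      r ^ d ≤ d.factorial * (∏ i, w i) * t.card := by
  induction d generalizing r with
  | zero => exact ⟨Finset.univ, by simpa using hr, by simp⟩
  | succ d ih =>
    have hpos {m : ℕ} (hm : m ∈ Finset.range ⌈r / w 0⌉₊) : 0 < r - m * w 0 :=
      sub_pos.2 ((lt_div_iff₀ (hw 0)).1 (Nat.lt_ceil.1 (Finset.mem_range.1 hm)))
    choose! slice hslice hcard using fun (s : ℝ) (hs : 0 < s) ↦ ih (fun i ↦ hw i.succ) hs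
    let t : Finset ((_ : ℕ) × (Fin d → ℕ)) :=
      (Finset.range ⌈r / w 0⌉₊).sigma fun m ↦ slice (r - m * w 0)
    let consEmb : ((_ : ℕ) × (Fin d → ℕ)) ↪ (Fin (d + 1) → ℕ) :=
      ⟨fun y ↦ Fin.cons y.1 y.2, fun _ _ h ↦ by simpa [Sigma.ext_iff] using Fin.cons_inj.1 h⟩
    refine ⟨t.map consEmb, Finset.forall_mem_map.2 fun y hy ↦ ?_, ?_⟩
    · obtain ⟨hm, hy⟩ := Finset.mem_sigma.1 hy
      rw [Fin.sum_univ_succ, mul_comm (w 0)]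
      exact lt_sub_iff_add_lt'.1 (hslice _ (hpos hm) _ hy)
    · calc r ^ (d + 1)
          ≤ (d + 1) * w 0 * ∑ m ∈ Finset.range ⌈r / w 0⌉₊, (r - m * w 0) ^ d :=
            pow_succ_le_sum_pow (hw 0) hr.le d
        _ ≤ (d + 1) * w 0 * ∑ m ∈ Finset.range ⌈r / w 0⌉₊,
              d.factorial * (∏ i : Fin d, w i.succ) * (slice (r - m * w 0)).card := by
            have := hw 0
            gcongr with m hm
            exact hcard _ (hpos hm)
        _ = (d + 1).factorial * (∏ i, w i) * (t.map consEmb).card := by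
            rw [Finset.card_map, Finset.card_sigma, ← Finset.mul_sum, Fin.prod_univ_succ,
              Nat.factorial_succ]
            push_cast
            ring

lemma factorial_mul_prod_pos {d : ℕ} {w : Fin d → ℝ} (hw : ∀ i, 0 < w i) :
    0 < d.factorial * ∏ i, w i :=
  mul_pos (Nat.cast_pos.2 d.factorial_pos) (Finset.prod_pos fun i _ ↦ hw i)

lemma exists_injective_sum_mul_pow_le {d : ℕ} (hd : d ≠ 0) {w : Fin d → ℝ} (hw : ∀ i, 0 < w i) :
    ∃ e : ℕ → Fin d → ℕ, Function.Injective e ∧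
      ∀ j, (∑ i, w i * e j i) ^ d ≤ d.factorial * (∏ i, w i) * j := by
  classical
  have : NeZero d := ⟨hd⟩
  obtain ⟨e, he, hlt⟩ := exists_injective_forall_lt_exists_lt (tendsto_sum_mul_natCast_atTop hw)
  refine ⟨e, he, fun j ↦ ?_⟩
  have hC := (factorial_mul_prod_pos hw).le
  have hnonneg : 0 ≤ ∑ i, w i * e j i :=
    Finset.sum_nonneg fun i _ ↦ mul_nonneg (hw i).le (Nat.cast_nonneg _)
  rcases hnonneg.eq_or_lt with hzero | hpos
  · rw [← hzero, zero_pow hd]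
    positivity
  obtain ⟨t, ht, hcard⟩ := exists_finset_sum_mul_lt hw hpos
  have htj : t.card ≤ j := by
    calc t.card ≤ ((Finset.range j).image e).card :=
          Finset.card_le_card fun x hx ↦ by simpa using hlt j x (ht x hx)
      _ ≤ j := Finset.card_image_le.trans_eq (Finset.card_range j)
  calc _ ≤ d.factorial * (∏ i, w i) * t.card := hcard
    _ ≤ d.factorial * (∏ i, w i) * j := by gcongr

/-! ### Lipschitz functions on `ℤ^d` -/

lemma abs_sub_sign_of_ne_zero {t : ℤ} (ht : t ≠ 0) : |t - t.sign| = |t| - 1 := by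
  rcases lt_or_gt_of_ne ht with h | h
  · rw [Int.sign_eq_neg_one_of_neg h, abs_of_neg h, abs_of_nonpos (by lia)]
    lia
  · rw [Int.sign_eq_one_of_pos h, abs_of_pos h, abs_of_nonneg (by lia)]

lemma exists_sum_abs_sub_eq_one {ι : Type*} [Fintype ι] {x y : ι → ℤ} (hxy : x ≠ y) :
    ∃ z : ι → ℤ, ∑ i, |x i - z i| = 1 ∧ ∑ i, |z i - y i| + 1 = ∑ i, |x i - y i| := by
  classical
  obtain ⟨i, hi⟩ := Function.ne_iff.1 hxy
  replace hi : x i - y i ≠ 0 := sub_ne_zero.2 hi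
  refine ⟨Function.update x i (x i - (x i - y i).sign), ?_, ?_⟩
  · rw [Fintype.sum_eq_single i fun j hj ↦ by simp [hj]]
    simp [Int.abs_sign_of_ne_zero hi]
  · rw [← Finset.sum_erase_add _ _ (Finset.mem_univ i),
      ← Finset.sum_erase_add (a := i) _ (fun j ↦ |x j - y j|) (Finset.mem_univ i),
      Finset.sum_congr rfl fun j hj ↦ by rw [Function.update_of_ne (Finset.ne_of_mem_erase hj)],
      Function.update_self, sub_right_comm, abs_sub_sign_of_ne_zero hi]
    ring

lemma IsLipschitzFn.abs_sub_le_sum {d : ℕ} {F : (Fin d → ℤ) → ℤ} (hF : IsLipschitzFn F)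
    (x y : Fin d → ℤ) : |F x - F y| ≤ ∑ i, |x i - y i| := by
  rcases eq_or_ne x y with rfl | hxy
  · simp
  obtain ⟨z, hxz, hzy⟩ := exists_sum_abs_sub_eq_one hxy
  linarith [abs_sub_le (F x) (F z) (F y), hF x z hxz, abs_sub_le_sum hF z y]
termination_by (∑ i, |x i - y i|).toNat
decreasing_by
  have := Finset.sum_nonneg fun i (_ : i ∈ Finset.univ) ↦ abs_nonneg (z i - y i)
  lia

/-! ### Walks along first closed sites -/

section Walk

variable {d : ℕ} {e : ℕ → Fin d → ℕ} {H : ℤ} {n : ℕ} {k : ℕ → ℕ} {ω : Config d} {α : ℝ}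
  {η : Fin d → ℤ}

/-- The site above `v` on the diagonal hyperplane `x_{d+1} = h + x_1 + ⋯ + x_d`. -/
def diagSite (h : ℤ) (v : Fin d → ℕ) : Site d :=
  Fin.snoc (fun a ↦ (v a : ℤ)) (h + ∑ a, (v a : ℤ))

lemma diagSite_inj {h₁ h₂ : ℤ} {v₁ v₂ : Fin d → ℕ} :
    diagSite h₁ v₁ = diagSite h₂ v₂ ↔ h₁ = h₂ ∧ v₁ = v₂ := by
  refine ⟨fun heq ↦ ?_, by rintro ⟨rfl, rfl⟩; rfl⟩
  obtain ⟨hv, hh⟩ := Fin.snoc_inj.1 heq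
  obtain rfl : v₁ = v₂ := by simpa only [funext_iff, Nat.cast_inj] using hv
  exact ⟨add_right_cancel hh, rfl⟩

/-- The position in `ℕ^d` reached after `i` steps of the walk whose `l`-th increment is
`e (k l)`. -/
def walkPos (e : ℕ → Fin d → ℕ) (k : ℕ → ℕ) (i : ℕ) : Fin d → ℕ :=
  ∑ l ∈ Finset.range i, e (k l)

/-- The `j`-th site inspected at step `i` of the walk. -/
def walkSite (e : ℕ → Fin d → ℕ) (H : ℤ) (k : ℕ → ℕ) (i j : ℕ) : Site d :=
  diagSite (H - i) (walkPos e k i + e j)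

/-- The event that, at each of the first `n` steps of the walk, the first closed site inspected is
the one with index `k i`. -/
def walkEvent (e : ℕ → Fin d → ℕ) (H : ℤ) (n : ℕ) (k : ℕ → ℕ) : Set (Config d) :=
  {ω | ∀ i < n, (∀ j < k i, ω (walkSite e H k i j) = true) ∧ ω (walkSite e H k i (k i)) = false}

lemma walkPos_succ (e : ℕ → Fin d → ℕ) (k : ℕ → ℕ) (i : ℕ) :
    walkPos e k (i + 1) = walkPos e k i + e (k i) :=
  Finset.sum_range_succ _ _

lemma walkSite_injective (he : Function.Injective e) (H : ℤ) (k : ℕ → ℕ) :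
    Function.Injective fun x : (_ : ℕ) × ℕ ↦ walkSite e H k x.1 x.2 := by
  rintro ⟨i, j⟩ ⟨i', j'⟩ h
  obtain ⟨hi, hv⟩ := diagSite_inj.1 h
  obtain rfl : i = i' := by lia
  obtain rfl : j = j' := he (add_left_cancel hv)
  rfl

lemma walkPos_congr (e : ℕ → Fin d → ℕ) {k k' : ℕ → ℕ} {i : ℕ} (h : ∀ l < i, k l = k' l) :
    walkPos e k i = walkPos e k' i :=
  Finset.sum_congr rfl fun l hl ↦ by rw [h l (Finset.mem_range.1 hl)]

lemma eq_of_mem_walkEvent {k k' : ℕ → ℕ} (hk : ω ∈ walkEvent e H n k)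
    (hk' : ω ∈ walkEvent e H n k') {i : ℕ} (hi : i < n) : k i = k' i := by
  induction i using Nat.strong_induction_on with
  | _ i ih =>
    have hsite : walkSite e H k i = walkSite e H k' i := by
      ext1 j
      rw [walkSite, walkSite, walkPos_congr e fun l hl ↦ ih l hl (hl.trans hi)]
    obtain ⟨hopen, hclosed⟩ := hk i hi
    obtain ⟨hopen', hclosed'⟩ := hk' i hi
    rw [hsite] at hopen hclosed
    rcases lt_trichotomy (k i) (k' i) with hlt | heq | hgt
    · simp [hopen' _ hlt] at hclosed
    · exact heq
    · simp [hopen _ hgt] at hclosed'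

lemma IsLipschitzFn.apply_walkPos_le {F : (Fin d → ℤ) → ℤ} (hF : IsLipschitzFn F)
    (hω : ω ∈ walkEvent e H n k) (hopen : ∀ x, ω (Fin.snoc x (F x)) = true) (h0 : F 0 ≤ H)
    {i : ℕ} (hi : i ≤ n) :
    F (fun a ↦ walkPos e k i a) ≤ H - i + ∑ a, (walkPos e k i a : ℤ) := by
  induction i with
  | zero => simpa [walkPos, ← Pi.zero_def] using h0
  | succ i ih =>
    set u := walkPos e k i
    set v := walkPos e k (i + 1)
    have hv : v = u + e (k i) := walkPos_succ e k i
    have hle : F (fun a ↦ v a) ≤ H - i + ∑ a, (v a : ℤ) := by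
      have hLip := (le_abs_self _).trans (hF.abs_sub_le_sum (fun a ↦ v a) (fun a ↦ u a))
      simp only [hv, Pi.add_apply, Nat.cast_add, add_sub_cancel_left, Nat.abs_cast,
        Finset.sum_add_distrib] at hLip ⊢
      linarith [ih (Nat.le_of_succ_le hi)]
    have hne : F (fun a ↦ v a) ≠ H - i + ∑ a, (v a : ℤ) := by
      intro heq
      have hclosed : ω (diagSite (H - i) v) = false := hv ▸ (hω i hi).2
      rw [diagSite, ← heq, hopen] at hclosed
      contradiction
    push_cast
    linarith [hle.lt_of_ne hne]

/-- The event that some open Lipschitz surface above the tilted plane has height at most `H` over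
the origin. -/
def LIPBelow (α : ℝ) (η : Fin d → ℤ) (H : ℤ) : Set (Config d) :=
  {ω | ∃ F : (Fin d → ℤ) → ℤ, IsLipschitzFn F ∧
    (∀ x : Fin d → ℤ, ω (Fin.snoc x (F x)) = true ∧ planeHt α η x < F x) ∧ F 0 ≤ H}

lemma LIP_eq_iUnion (α : ℝ) (η : Fin d → ℤ) : LIP α η = ⋃ H, LIPBelow α η H := by
  ext ω
  simp only [LIP, LIPBelow, Set.mem_ofPred_eq, Set.mem_iUnion]
  exact ⟨fun ⟨F, hF, hω⟩ ↦ ⟨F 0, F, hF, hω, le_rfl⟩, fun ⟨_, F, hF, hω, _⟩ ↦ ⟨F, hF, hω⟩⟩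

lemma monotone_LIPBelow (α : ℝ) (η : Fin d → ℤ) : Monotone (LIPBelow α η) :=
  fun _ _ hH _ ⟨F, hF, hω, h0⟩ ↦ ⟨F, hF, hω, h0.trans hH⟩

lemma lt_sum_of_mem_LIPBelow (hω : ω ∈ LIPBelow α η H) (hk : ω ∈ walkEvent e H n k) :
    (n : ℝ) - H < ∑ l ∈ Finset.range n, ∑ a, (1 - α * η a) * e (k l) a := by
  obtain ⟨F, hF, hopen, h0⟩ := hω
  set v := walkPos e k n with hv
  have hupper : (F (fun a ↦ v a) : ℝ) ≤ H - n + ∑ a, (v a : ℝ) := by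
    exact_mod_cast hF.apply_walkPos_le hk (fun x ↦ (hopen x).1) h0 le_rfl
  have hlower : α * ∑ a, (η a : ℝ) * v a < F (fun a ↦ v a) := by
    simpa using Int.floor_lt.1 (hopen fun a ↦ v a).2
  calc (n : ℝ) - H < ∑ a, (v a : ℝ) - α * ∑ a, (η a : ℝ) * v a := by linarith
    _ = ∑ a, (1 - α * η a) * v a := by
      simp only [Finset.mul_sum, ← Finset.sum_sub_distrib, sub_mul, one_mul, mul_assoc]
    _ = ∑ l ∈ Finset.range n, ∑ a, (1 - α * η a) * e (k l) a := by
      rw [Finset.sum_comm]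
      simp [hv, walkPos, Finset.mul_sum]

lemma natCast_mul_sum_le_of_pow_le {ι : Type*} {s : Finset ι} {y b : ι → ℝ}
    (hy : ∀ i ∈ s, -1 ≤ y i) (hpow : ∀ i ∈ s, y i ^ d ≤ b i) :
    d * ∑ i ∈ s, y i ≤ ∑ i ∈ s, b i + s.card * (d - 1) := by
  rw [Finset.mul_sum, ← nsmul_eq_mul s.card, ← Finset.sum_const, ← Finset.sum_add_distrib]
  refine Finset.sum_le_sum fun i hi ↦ ?_
  linarith [one_add_mul_sub_le_pow (hy i hi) d, hpow i hi]

lemma sub_mul_lt_of_mem_LIPBelow (hd : d ≠ 0) (hη : ∀ i, α * η i < 1) {C : ℝ}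
    (hbound : ∀ j, (∑ i, (1 - α * η i) * e j i) ^ d ≤ C * j) (hω : ω ∈ LIPBelow α η H)
    (hk : ω ∈ walkEvent e H n k) :
    (n : ℝ) - d * H < C * ∑ l ∈ Finset.range n, (k l : ℝ) := by
  have hnonneg (l : ℕ) : 0 ≤ ∑ a, (1 - α * η a) * e (k l) a :=
    Finset.sum_nonneg fun a _ ↦ mul_nonneg (sub_pos.2 (hη a)).le (Nat.cast_nonneg _)
  have hsum := natCast_mul_sum_le_of_pow_le (s := Finset.range n)
    (fun l _ ↦ neg_one_lt_zero.le.trans (hnonneg l)) fun l _ ↦ hbound (k l)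
  rw [← Finset.mul_sum, Finset.card_range] at hsum
  have hwalk := mul_lt_mul_of_pos_left (lt_sum_of_mem_LIPBelow hω hk)
    (Nat.cast_pos.2 (Nat.pos_of_ne_zero hd) : (0 : ℝ) < d)
  linarith

end Walk

/-! ### The law of the walk -/

open ProbabilityTheory
open scoped unitInterval

lemma hasSum_mean_geometric {q : I} (hq : q ≠ 0) :
    HasSum (fun n : ℕ ↦ (1 - q : ℝ) ^ n * q * n) ((1 - q) / q) := by
  have hq0 : (0 : ℝ) < q := unitInterval.pos_iff_ne_zero.2 hq
  have hnorm : ‖(1 - q : ℝ)‖ < 1 := by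
    rw [Real.norm_of_nonneg (unitInterval.one_minus_nonneg q)]
    linarith
  convert! (hasSum_coe_mul_geometric_of_norm_lt_one hnorm).mul_right (q : ℝ) using 1
  · ext n; ring
  · rw [_root_.sub_sub_cancel]
    field_simp

lemma integrable_natCast_geometricMeasure {q : I} (hq : q ≠ 0) :
    Integrable (fun n : ℕ ↦ (n : ℝ)) (geometricMeasure q) := by
  rw [integrable_geometricMeasure_iff hq]
  simpa using (hasSum_mean_geometric hq).summable

lemma integral_natCast_geometricMeasure {q : I} (hq : q ≠ 0) :
    ∫ n : ℕ, (n : ℝ) ∂geometricMeasure q = (1 - q) / q := by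
  rw [integral_geometricMeasure hq]
  exact (hasSum_mean_geometric hq).tsum_eq

/-- The law of `n` independent geometric variables with success probability `q`. -/
noncomputable abbrev geometricPi (q : I) (n : ℕ) : Measure (Fin n → ℕ) :=
  Measure.pi fun _ ↦ geometricMeasure q

lemma integrable_sum_geometricPi {q : I} (hq : q ≠ 0) (n : ℕ) :
    Integrable (fun k ↦ ∑ i, (k i : ℝ)) (geometricPi q n) :=
  integrable_finsetSum _ fun _ _ ↦ integrable_comp_eval (integrable_natCast_geometricMeasure hq)

lemma integral_sum_geometricPi {q : I} (hq : q ≠ 0) (n : ℕ) :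
    ∫ k, ∑ i, (k i : ℝ) ∂geometricPi q n = n * ((1 - q) / q) := by
  have hmean (i : Fin n) : ∫ k, (k i : ℝ) ∂geometricPi q n = (1 - q) / q :=
    (integral_comp_eval (μ := fun _ : Fin n ↦ geometricMeasure q) (i := i)
      (f := fun m : ℕ ↦ (m : ℝ)) (by fun_prop)).trans
      (integral_natCast_geometricMeasure hq)
  rw [integral_finsetSum _ fun i _ ↦ integrable_comp_eval (integrable_natCast_geometricMeasure hq)]
  simp [hmean]

lemma walkEvent_eq_cylinder {d : ℕ} (e : ℕ → Fin d → ℕ) (H : ℤ) (n : ℕ) (k : ℕ → ℕ) :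
    walkEvent e H n k = {ω | ∀ x ∈ (Finset.range n).sigma fun i ↦ Finset.range (k i + 1),
      ω (walkSite e H k x.1 x.2) = decide (x.2 < k x.1)} := by
  ext ω
  simp only [walkEvent, Set.mem_ofPred_eq, Finset.mem_sigma, Finset.mem_range, Sigma.forall]
  grind

lemma measurableSet_walkEvent {d : ℕ} (e : ℕ → Fin d → ℕ) (H : ℤ) (n : ℕ) (k : ℕ → ℕ) :
    MeasurableSet (walkEvent e H n k) := by
  unfold walkEvent
  measurability

lemma IsBernoulli.measure_cylinder {ι κ : Type*} {p : ℝ} {P : Measure (ι → Bool)}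
    (hP : IsBernoulli p P) {g : κ → ι} (hg : Function.Injective g) (t : Finset κ) (b : κ → Bool) :
    P {ω | ∀ x ∈ t, ω (g x) = b x} =
      ∏ x ∈ t, (if b x then ENNReal.ofReal p else ENNReal.ofReal (1 - p)) := by
  simpa [hg.extend_apply] using hP.2 (t.map ⟨g, hg⟩) (Function.extend g b fun _ ↦ true)

lemma IsBernoulli.measure_walkEvent {d : ℕ} {e : ℕ → Fin d → ℕ} (he : Function.Injective e)
    {p : ℝ} {P : Measure (Config d)} (hP : IsBernoulli p P) (H : ℤ) (n : ℕ) (k : ℕ → ℕ) :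
    P (walkEvent e H n k) =
      ∏ i ∈ Finset.range n, ENNReal.ofReal p ^ k i * ENNReal.ofReal (1 - p) := by
  have hstep (i : ℕ) : ∏ j ∈ Finset.range (k i + 1),
      (if decide (j < k i) then ENNReal.ofReal p else ENNReal.ofReal (1 - p)) =
        ENNReal.ofReal p ^ k i * ENNReal.ofReal (1 - p) := by
    rw [Finset.prod_range_succ, Finset.prod_congr rfl fun j hj ↦
      if_pos (decide_eq_true (Finset.mem_range.1 hj))]
    simp
  rw [walkEvent_eq_cylinder, hP.measure_cylinder (walkSite_injective he H k)
    ((Finset.range n).sigma fun i ↦ Finset.range (k i + 1)) fun x ↦ decide (x.2 < k x.1),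
    Finset.prod_sigma]
  exact Finset.prod_congr rfl fun i _ ↦ hstep i

/-- The extension of a finite sequence by zeros, giving the outcomes of `n` geometric variables
the type of the index sequence of a walk. -/
noncomputable def extendZero {n : ℕ} (k : Fin n → ℕ) : ℕ → ℕ := Function.extend Fin.val k 0

lemma extendZero_val {n : ℕ} (k : Fin n → ℕ) (i : Fin n) : extendZero k i = k i :=
  Fin.val_injective.extend_apply k 0 i

lemma IsBernoulli.measure_walkEvent_extendZero {d : ℕ} {e : ℕ → Fin d → ℕ}
    (he : Function.Injective e) {q : I} (hq : q ≠ 0) {P : Measure (Config d)}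
    (hP : IsBernoulli (1 - q) P) (H : ℤ) {n : ℕ} (k : Fin n → ℕ) :
    P (walkEvent e H n (extendZero k)) = geometricPi q n {k} := by
  rw [hP.measure_walkEvent he, Finset.prod_range, Measure.pi_singleton]
  refine Finset.prod_congr rfl fun i _ ↦ ?_
  have h : (0 : ℝ) ≤ 1 - q := unitInterval.one_minus_nonneg q
  rw [geometricMeasure_singleton hq, extendZero_val, ENNReal.ofReal_mul (by positivity),
    ENNReal.ofReal_pow h, _root_.sub_sub_cancel]

lemma disjoint_walkEvent_extendZero {d : ℕ} (e : ℕ → Fin d → ℕ) (H : ℤ) (n : ℕ) :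
    Pairwise (Function.onFun Disjoint fun k : Fin n → ℕ ↦ walkEvent e H n (extendZero k)) := by
  refine fun k k' hkk' ↦ Set.disjoint_left.2 fun ω hk hk' ↦ hkk' ?_
  ext i
  simpa only [extendZero_val] using eq_of_mem_walkEvent hk hk' i.2

lemma IsBernoulli.measure_le_geometricPi {d : ℕ} {e : ℕ → Fin d → ℕ}
    (he : Function.Injective e) {q : I} (hq : q ≠ 0) {P : Measure (Config d)}
    (hP : IsBernoulli (1 - q) P) {H : ℤ} {n : ℕ} {A : Set (Config d)} {B : Set (Fin n → ℕ)}
    (hAB : ∀ ω ∈ A, ∀ k, ω ∈ walkEvent e H n (extendZero k) → k ∈ B) :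
    P A ≤ geometricPi q n B := by
  have := hP.1
  let E : Set (Config d) := ⋃ k ∈ Bᶜ, walkEvent e H n (extendZero k)
  have hE : MeasurableSet E :=
    MeasurableSet.biUnion (Set.to_countable _) fun k _ ↦ measurableSet_walkEvent e H n _
  have hPE : P E = geometricPi q n Bᶜ := by
    rw [measure_biUnion (Set.to_countable _) ((disjoint_walkEvent_extendZero e H n).set_pairwise _)
      fun k _ ↦ measurableSet_walkEvent e H n _]
    simp_rw [hP.measure_walkEvent_extendZero he hq]
    rw [← measure_biUnion (Set.to_countable _) (fun _ _ _ _ h ↦ Set.disjoint_singleton.2 h)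
      fun k _ ↦ measurableSet_singleton k, Set.biUnion_of_singleton]
  calc P A ≤ P Eᶜ := by
        refine measure_mono fun ω hω ↦ ?_
        simp only [E, Set.mem_compl_iff, Set.mem_iUnion, not_exists]
        exact fun k hk hωk ↦ hk (hAB ω hω k hωk)
    _ = geometricPi q n B := by
        rw [prob_compl_eq_one_sub hE, hPE,
          ← prob_compl_eq_one_sub (Set.to_countable _).measurableSet, compl_compl]

/-! ### The critical probability -/

lemma IsBernoulli.sub_mul_measureReal_LIPBelow_le {d : ℕ} (hd : d ≠ 0) {α : ℝ} {η : Fin d → ℤ}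
    (hη : ∀ i, α * η i < 1) {q : I} (hq : q ≠ 0) {P : Measure (Config d)}
    (hP : IsBernoulli (1 - q) P) (H : ℤ) (n : ℕ) :
    ((n : ℝ) - d * H) * P.real (LIPBelow α η H) ≤
      d.factorial * (∏ i, (1 - α * η i)) * (n * ((1 - q) / q)) := by
  have hw (i : Fin d) : 0 < 1 - α * η i := sub_pos.2 (hη i)
  obtain ⟨e, he, hbound⟩ := exists_injective_sum_mul_pow_le hd hw
  set C : ℝ := d.factorial * ∏ i, (1 - α * η i)
  have hC : 0 ≤ C := (factorial_mul_prod_pos hw).le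
  rcases le_total ((n : ℝ) - d * H) 0 with hneg | hpos
  · have := unitInterval.one_minus_nonneg q
    have := q.2.1
    exact (mul_nonpos_of_nonpos_of_nonneg hneg measureReal_nonneg).trans (by positivity)
  calc ((n : ℝ) - d * H) * P.real (LIPBelow α η H)
      ≤ ((n : ℝ) - d * H) * (geometricPi q n).real {k | (n : ℝ) - d * H ≤ C * ∑ i, (k i : ℝ)} := by
        refine mul_le_mul_of_nonneg_left (ENNReal.toReal_mono (measure_ne_top _ _) ?_) hpos
        refine hP.measure_le_geometricPi (H := H) he hq fun ω hω k hk ↦ ?_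
        have hlt := sub_mul_lt_of_mem_LIPBelow hd hη hbound hω hk
        simp only [Finset.sum_range, extendZero_val] at hlt
        exact hlt.le
    _ ≤ ∫ k, C * ∑ i, (k i : ℝ) ∂geometricPi q n :=
        mul_meas_ge_le_integral_of_nonneg (.of_forall fun k ↦ by positivity)
          ((integrable_sum_geometricPi hq n).const_mul C) _
    _ = C * (n * ((1 - q) / q)) := by
        rw [integral_const_mul, integral_sum_geometricPi hq]

lemma le_of_forall_natCast_sub_mul_le {b c x : ℝ} (h : ∀ n : ℕ, (n - b) * x ≤ n * c) : x ≤ c := by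
  by_contra! hcx
  obtain ⟨n, hn⟩ := exists_nat_gt (b * x / (x - c))
  rw [div_lt_iff₀ (sub_pos.2 hcx)] at hn
  linarith [h n]

lemma IsBernoulli.measure_LIP_le {d : ℕ} (hd : d ≠ 0) {α : ℝ} {η : Fin d → ℤ}
    (hη : ∀ i, α * η i < 1) {q : I} (hq : q ≠ 0) {P : Measure (Config d)}
    (hP : IsBernoulli (1 - q) P) :
    P (LIP α η) ≤ ENNReal.ofReal (d.factorial * (∏ i, (1 - α * η i)) * ((1 - q) / q)) := by
  have := hP.1
  rw [LIP_eq_iUnion, (monotone_LIPBelow α η).measure_iUnion]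
  refine iSup_le fun H ↦ ?_
  rw [← ofReal_measureReal]
  refine ENNReal.ofReal_le_ofReal (le_of_forall_natCast_sub_mul_le (b := d * H) fun n ↦ ?_)
  exact (hP.sub_mul_measureReal_LIPBelow_le hd hη hq H n).trans_eq (mul_left_comm _ _ _)

lemma IsBernoulli.one_sub_le_of_measure_LIP_eq_one {d : ℕ} (hd : d ≠ 0) {α : ℝ} {η : Fin d → ℤ}
    (hη : ∀ i, α * η i < 1) {p : ℝ} (hp : p ∈ Set.Icc 0 1) {P : Measure (Config d)}
    (hP : IsBernoulli p P) (hLIP : P (LIP α η) = 1) :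
    1 - p ≤ d.factorial * (∏ i, (1 - α * η i)) /
      (1 + d.factorial * (∏ i, (1 - α * η i))) := by
  have hC := (factorial_mul_prod_pos fun i ↦ sub_pos.2 (hη i)).le
  set C : ℝ := d.factorial * ∏ i, (1 - α * η i)
  rcases hp.2.eq_or_lt with rfl | hp1
  · simpa using div_nonneg hC (by linarith)
  have hq : 0 < 1 - p := sub_pos.2 hp1
  let q : I := ⟨1 - p, Set.Icc.mem_iff_one_sub_mem.1 hp⟩
  have hle := IsBernoulli.measure_LIP_le (q := q) hd hη (Set.Icc.coe_ne_zero.1 hq.ne')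
    (by simpa [q] using hP)
  rw [hLIP, ENNReal.one_le_ofReal, ← mul_div_assoc, le_div_iff₀ hq] at hle
  rw [le_div_iff₀ (by linarith)]
  linarith

theorem qL_general_upper_bound_general {d : ℕ} (hd : 1 ≤ d) (α : ℝ) (η : Fin d → ℤ)
    (hη : ∀ i, α * η i < 1)
    (P : ℝ → Measure (Config d)) (hP : ∀ p ∈ Set.Icc (0 : ℝ) 1, IsBernoulli p (P p))
    (pc : ℝ) (hpc : IsCriticalProb P α η pc) :
    1 - pc ≤ d.factorial * (∏ i, (1 - α * η i)) /
        (1 + d.factorial * (∏ i, (1 - α * η i))) ∧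
      d.factorial * (∏ i, (1 - α * η i)) / (1 + d.factorial * (∏ i, (1 - α * η i))) ≤
        d.factorial * (∏ i, (1 - α * η i)) := by
  have hC := (factorial_mul_prod_pos fun i ↦ sub_pos.2 (hη i)).le
  refine ⟨?_, div_le_self hC (by linarith)⟩
  obtain ⟨⟨hpc0, hpc1⟩, -, hsup⟩ := hpc
  refine le_of_forall_lt_imp_le_of_dense fun a ha ↦ ?_
  obtain ⟨p, hpcp, hpa⟩ := exists_between (lt_min (lt_sub_comm.1 ha) hpc1)
  have hp : p ∈ Set.Icc (0 : ℝ) 1 := ⟨by linarith, (hpa.trans_le (min_le_right _ _)).le⟩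
  have := (hP p hp).one_sub_le_of_measure_LIP_eq_one (by omega) hη hp (hsup p hpcp hp.2)
  linarith [hpa.trans_le (min_le_left _ _)]

/-- General upper bound: for every `α ∈ [0,1)` and `d ≥ 1`,
`q_L(α,d,d) ≤ d!·(1−α)^d / (1 + d!·(1−α)^d) ≤ d!·(1−α)^d`. -/
theorem qL_general_upper_bound
    {d : ℕ} (hd : 1 ≤ d) (α : ℝ) (hα : α ∈ Set.Ico (0 : ℝ) 1)
    (P : ℝ → Measure (Config d)) (hP : ∀ p ∈ Set.Icc (0 : ℝ) 1, IsBernoulli p (P p))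
    (pc : ℝ) (hpc : IsCriticalProb P α (etaK d d) pc) :
    1 - pc ≤ (d.factorial : ℝ) * (1 - α) ^ d / (1 + (d.factorial : ℝ) * (1 - α) ^ d) ∧
    (d.factorial : ℝ) * (1 - α) ^ d / (1 + (d.factorial : ℝ) * (1 - α) ^ d) ≤
      (d.factorial : ℝ) * (1 - α) ^ d := by
  simpa [etaK] using
    qL_general_upper_bound_general hd α (etaK d d) (by simpa [etaK] using fun _ ↦ hα.2) P hP pc hpc
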